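/- (Two towers.) Let (X, T, ℤ^d) be a minimal free action of ℤ^d on a compact metric space X, and let N ∈ ℕ and ε > 0 be arbitrary. Then there exist integers N₀, N₁ ≥ N, open sets Ω₀, Ω₁ ⊆ X such that each of the families {T^{-m}(Ω₀) : m ∈ {0,…,N₀−1}^d} and {T^{-m}(Ω₁) : m ∈ {0,…,N₁−1}^d} consists of pairwise disjoint sets, finitely many open sets U₁, …, U_K with U₁ ∪ ⋯ ∪ U_K ⊇ X \ ⋃_{m∈{0,…,N₀−1}^d} T^{-m}(Ω₀), and elements h₁, …, h_K ∈ ℤ^d, such that: (1) T^{h_k}(U_k) ⊆ ⋃_{m∈{0,…,N₁−1}^d} T^{-m}(Ω₁) for each k = 1, …, K; (2) the index set {1, …, K} can be partitioned into at most (⌊2√d⌋+1)^d groups such that whenever k ≠ k' lie in the same group, T^{h_k}(U_k) ∩ T^{h_{k'}}(U_{k'}) = ∅; (3) for each x ∈ Ω₁ one has #{m ∈ {0,…,N₁−1}^d : T^m x ∈ ⋃_{k=1}^K T^{h_k}(U_k)} < ε·N₁^d. -/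

import Mathlib

/-!
Let `φ` be a bump function whose support every orbit meets, and whose return times are far apart.
Each `x` carries the power diagram of its return times `v` with power distances
`|v - y|² + t / φ (v +ᵥ x)`. That a point lies in the open cell of `v` is an open condition on `x`,
since a site moves off to infinite power distance before it disappears. For `t = 1` the cubes inside
the cells form the first tower, and the points that it misses lie in thin boundary layers of the
cells.

Halving the distance from `y` to its site `v` contracts the cell of `v` for `t = 1` into the cell of
`v` for `t = 1 / 2`, and since the sites are far apart its image stays far from the boundary of the
latter: with `m = (y + v) / 2`, the squared distances satisfy
`|u - m|² - |v - m|² = (|u - y|² - |v - y|²) / 2 + |u - v|² / 2`. So translating the boundary layer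
halfway to the site, by one of finitely many vectors, moves it into the second tower, which consists
of the cubes inside the cells for `t = 1 / 2`. The image point and the parity of the return time
determine the return time, so `2 ^ d` colours suffice to make the translates disjoint. Finally, a
layer near a face of the cell, whose normal vector has its largest coordinate in direction `i`,
meets lines in direction `i` in a bounded number of points, so the translates have small density in
large cubes.
-/

namespace TwoTowers

open Set Filter Topology
open scoped NNReal Pointwise

section Lattice

variable {d : ℕ}

/-- The `ℓ¹` norm on `ℤ^d`; the depth of a point inside a cell is measured against it. -/
def l1Norm (v : Fin d → ℤ) : ℤ := ∑ i, |v i|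

lemma l1Norm_nonneg (v : Fin d → ℤ) : 0 ≤ l1Norm v :=
  Finset.sum_nonneg fun _ _ => abs_nonneg _

lemma abs_apply_le_l1Norm (v : Fin d → ℤ) (i : Fin d) : |v i| ≤ l1Norm v :=
  Finset.single_le_sum (f := fun i => |v i|) (fun _ _ => abs_nonneg _) (Finset.mem_univ i)

lemma l1Norm_pos {v : Fin d → ℤ} (hv : v ≠ 0) : 0 < l1Norm v := by
  obtain ⟨i, hi⟩ := Function.ne_iff.1 hv
  exact (abs_pos.2 hi).trans_le (abs_apply_le_l1Norm v i)

lemma l1Norm_le_mul_of_forall_abs_le {v : Fin d → ℤ} {b : ℤ} (hb : ∀ i, |v i| ≤ b) :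
    l1Norm v ≤ d * b :=
  (Finset.sum_le_card_nsmul _ _ b fun i _ => hb i).trans_eq (by simp)

lemma abs_dotProduct_le {q : Fin d → ℤ} {b : ℤ} (hq : ∀ i, |q i| ≤ b) (v : Fin d → ℤ) :
    |q ⬝ᵥ v| ≤ b * l1Norm v := by
  rw [l1Norm, Finset.mul_sum]
  refine (Finset.abs_sum_le_sum_abs _ _).trans (Finset.sum_le_sum fun i _ => ?_)
  rw [abs_mul]
  exact mul_le_mul_of_nonneg_right (hq i) (abs_nonneg _)

lemma sq_apply_le_dotProduct_self (v : Fin d → ℤ) (i : Fin d) : v i ^ 2 ≤ v ⬝ᵥ v := by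
  rw [sq]
  exact Finset.single_le_sum (f := fun i => v i * v i) (fun _ _ => mul_self_nonneg _)
    (Finset.mem_univ i)

lemma mul_l1Norm_le_dotProduct_self {A : ℤ} {v : Fin d → ℤ} {j : Fin d} (hj : d * A ≤ |v j|) :
    A * l1Norm v ≤ v ⬝ᵥ v := by
  have : Nonempty (Fin d) := ⟨j⟩
  obtain ⟨k, hk⟩ := Finite.exists_max fun i => |v i|
  have hsq : |v k| * |v k| ≤ v ⬝ᵥ v := by
    rw [abs_mul_abs_self, ← sq]
    exact sq_apply_le_dotProduct_self v k
  rcases le_total A 0 with hA | hA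
  · nlinarith [l1Norm_nonneg v, mul_self_nonneg |v k|]
  calc A * l1Norm v ≤ A * (d * |v k|) :=
        mul_le_mul_of_nonneg_left (l1Norm_le_mul_of_forall_abs_le hk) hA
    _ = d * A * |v k| := by ring
    _ ≤ |v k| * |v k| := mul_le_mul_of_nonneg_right (hj.trans (hk j)) (abs_nonneg _)
    _ ≤ v ⬝ᵥ v := hsq

lemma two_mul_l1Norm_le (b : ℝ) (v : Fin d → ℤ) :
    2 * b * l1Norm v ≤ (v ⬝ᵥ v : ℤ) + d * b ^ 2 := by
  have h : ∀ i ∈ Finset.univ, 2 * b * |(v i : ℝ)| ≤ (v i : ℝ) * v i + b ^ 2 := fun i _ => by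
    nlinarith [sq_nonneg (|(v i : ℝ)| - b), sq_abs (v i : ℝ)]
  simpa [l1Norm, dotProduct, Finset.mul_sum, Finset.sum_add_distrib] using Finset.sum_le_sum h

lemma finite_dotProduct_self_le (a b : ℝ) :
    {v : Fin d → ℤ | ((v ⬝ᵥ v : ℤ) : ℝ) ≤ a + b * l1Norm v}.Finite := by
  obtain ⟨R, hR⟩ := exists_nat_ge (2 * a + d * b ^ 2)
  refine (Set.finite_Icc (fun _ : Fin d => -(R : ℤ)) fun _ => (R : ℤ)).subset fun v hv => ?_
  have hvR : v ⬝ᵥ v ≤ R := by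
    have hv : ((v ⬝ᵥ v : ℤ) : ℝ) ≤ a + b * l1Norm v := hv
    have := two_mul_l1Norm_le b v
    exact_mod_cast (by linarith : ((v ⬝ᵥ v : ℤ) : ℝ) ≤ R)
  have habs : ∀ i, |v i| ≤ R := fun i => by
    nlinarith [sq_apply_le_dotProduct_self v i, sq_abs (v i), abs_nonneg (v i)]
  exact ⟨fun i => (abs_le.1 (habs i)).1, fun i => (abs_le.1 (habs i)).2⟩

end Lattice

section Cells

variable {d : ℕ} {a : (Fin d → ℤ) → ℝ≥0} {t c : ℝ} {v u y : Fin d → ℤ}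

/-- A function `a` on `ℤ^d` has the sites `{v | 0 < a v}`, and the power distance from `y` to the
site `v` is `|v - y|² + t / a v`. This is the power distance from `y` to `u` minus the one to `v`.
A site dies as `a v → 0`, when its power distance tends to infinity. -/
noncomputable def powerGap (a : (Fin d → ℤ) → ℝ≥0) (t : ℝ) (v u y : Fin d → ℤ) : ℝ :=
  ((u - y) ⬝ᵥ (u - y) - (v - y) ⬝ᵥ (v - y) : ℤ) + t * ((a u : ℝ)⁻¹ - (a v : ℝ)⁻¹)

/-- The points of depth more than `c` in the cell of the site `v` of the power diagram of `a`:
those closer to `v` than to any other site `u`, by a margin of `c * l1Norm (u - v)`. For `c = 0`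
this is the open cell; a negative `c` enlarges it. -/
def cell (a : (Fin d → ℤ) → ℝ≥0) (t c : ℝ) (v : Fin d → ℤ) : Set (Fin d → ℤ) :=
  {y | 0 < a v ∧ ∀ u, 0 < a u → u ≠ v → c * l1Norm (u - v) < powerGap a t v u y}

/-- The points of the enlarged cell of `v` whose depth is less than `c`. -/
def boundaryLayer (a : (Fin d → ℤ) → ℝ≥0) (t c : ℝ) (v : Fin d → ℤ) : Set (Fin d → ℤ) :=
  {y ∈ cell a t (-1) v | ∃ u, 0 < a u ∧ u ≠ v ∧ powerGap a t v u y < c * l1Norm (u - v)}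

/-- The sites of `a` are far apart: `A * l1Norm (u - v) ≤ |u - v|²` for distinct sites. -/
def IsSeparated (A : ℤ) (a : (Fin d → ℤ) → ℝ≥0) : Prop :=
  ∀ u v, 0 < a u → 0 < a v → u ≠ v → A * l1Norm (u - v) ≤ (u - v) ⬝ᵥ (u - v)

lemma powerGap_add (a : (Fin d → ℤ) → ℝ≥0) (t : ℝ) (v u y q : Fin d → ℤ) :
    powerGap a t v u (y + q) = powerGap a t v u y - 2 * (q ⬝ᵥ (u - v) : ℤ) := by
  simp only [powerGap, sub_dotProduct, dotProduct_sub, add_dotProduct, dotProduct_add,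
    dotProduct_comm u, dotProduct_comm v]
  push_cast
  ring

lemma powerGap_half (a : (Fin d → ℤ) → ℝ≥0) (t : ℝ) (v u y p : Fin d → ℤ) :
    powerGap a (t / 2) v u p = (powerGap a t v u y + ((u - v) ⬝ᵥ (u - v) : ℤ)) / 2
      + ((v - p + (y - p)) ⬝ᵥ (u - v) : ℤ) := by
  simp only [powerGap, sub_dotProduct, dotProduct_sub, add_dotProduct,
    dotProduct_comm y, dotProduct_comm p, dotProduct_comm u v]
  push_cast
  ring

lemma powerGap_swap (a : (Fin d → ℤ) → ℝ≥0) (t : ℝ) (v u y : Fin d → ℤ) :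
    powerGap a t u v y = -powerGap a t v u y := by
  simp only [powerGap]
  push_cast
  ring

lemma l1Norm_sub_pos (huv : u ≠ v) : (0 : ℝ) < l1Norm (u - v) :=
  Int.cast_pos.2 (l1Norm_pos (sub_ne_zero.2 huv))

lemma mem_cell_translate {q : Fin d → ℤ} :
    y ∈ cell (fun w => a (w + q)) t c v ↔ y + q ∈ cell a t c (v + q) := by
  refine and_congr_right fun _ => ((Equiv.addRight q).forall_congr fun u => ?_)
  simp [powerGap]

lemma mem_boundaryLayer_translate {q : Fin d → ℤ} :
    y ∈ boundaryLayer (fun w => a (w + q)) t c v ↔ y + q ∈ boundaryLayer a t c (v + q) := by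
  refine and_congr mem_cell_translate ((Equiv.addRight q).exists_congr fun u => ?_)
  simp [powerGap]

lemma cell_anti (a : (Fin d → ℤ) → ℝ≥0) (t : ℝ) (v : Fin d → ℤ) :
    Antitone fun c => cell a t c v := fun _ _ hc _ hy =>
  ⟨hy.1, fun u hu huv =>
    (mul_le_mul_of_nonneg_right hc (l1Norm_sub_pos huv).le).trans_lt (hy.2 u hu huv)⟩

lemma add_mem_cell (hy : y ∈ cell a t c v) {q : Fin d → ℤ} {b : ℤ} (hq : ∀ i, |q i| ≤ b) :
    y + q ∈ cell a t (c - 2 * b) v := by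
  refine ⟨hy.1, fun u hu huv => ?_⟩
  have hgap := hy.2 u hu huv
  have hdot : ((q ⬝ᵥ (u - v) : ℤ) : ℝ) ≤ b * l1Norm (u - v) := by
    exact_mod_cast (abs_le.1 (abs_dotProduct_le hq (u - v))).2
  rw [powerGap_add]
  linarith

lemma eq_of_mem_cell_of_mem_cell (hv : y ∈ cell a t 0 v) (hu : y ∈ cell a t 0 u) : v = u := by
  by_contra hne
  have hvu := hv.2 u hu.1 (Ne.symm hne)
  have huv := hu.2 v hv.1 hne
  rw [powerGap_swap] at huv
  linarith

lemma mem_cell_or_mem_boundaryLayer {c' : ℝ} (hc : c' < c) (hy : y ∈ cell a t (-1) v) :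
    y ∈ cell a t c' v ∨ y ∈ boundaryLayer a t c v := by
  refine or_iff_not_imp_right.2 fun hnot => ⟨hy.1, fun u hu huv => ?_⟩
  have hle : c * l1Norm (u - v) ≤ powerGap a t v u y :=
    not_lt.1 fun hlt => hnot ⟨hy, u, hu, huv, hlt⟩
  exact (mul_lt_mul_of_pos_right hc (l1Norm_sub_pos huv)).trans_le hle

lemma exists_mem_cell (ht : 0 ≤ t) (hc : c < 0) (ha : ∃ v, 0 < a v) (y : Fin d → ℤ) :
    ∃ v, y ∈ cell a t c v := by
  obtain ⟨v₀, hv₀⟩ := ha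
  let power : (Fin d → ℤ) → ℝ := fun u => ((u - y) ⬝ᵥ (u - y) : ℤ) + t * (a u : ℝ)⁻¹
  have hfin : {u | 0 < a u ∧ power u ≤ power v₀}.Finite := by
    refine ((finite_dotProduct_self_le (power v₀) 0).preimage
      (sub_left_injective (b := y)).injOn).subset fun u hu => ?_
    have : 0 ≤ t * (a u : ℝ)⁻¹ := by positivity
    have := hu.2
    simp only [mem_preimage, mem_ofPred_eq, power] at *
    linarith
  obtain ⟨v, ⟨hv, hvv₀⟩, hmin⟩ := exists_min_image _ power hfin ⟨v₀, hv₀, le_rfl⟩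
  refine ⟨v, hv, fun u hu huv => ?_⟩
  have hvu : power v ≤ power u := by
    by_cases h : power u ≤ power v₀
    · exact hmin u ⟨hu, h⟩
    · exact hvv₀.trans (not_le.1 h).le
  calc c * l1Norm (u - v) < 0 := mul_neg_of_neg_of_pos hc (l1Norm_sub_pos huv)
    _ ≤ power u - power v := sub_nonneg.2 hvu
    _ = powerGap a t v u y := by simp only [power, powerGap]; push_cast; ring

lemma lt_powerGap_of_lt_dotProduct_self {C : ℝ} (ht : 0 ≤ t) (hC : t * (a v : ℝ)⁻¹ ≤ C)
    (hfar : C + (c + 2 * l1Norm (y - v)) * l1Norm (u - v) < ((u - v) ⬝ᵥ (u - v) : ℤ)) :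
    c * l1Norm (u - v) < powerGap a t v u y := by
  have hdot : (((y - v) ⬝ᵥ (u - v) : ℤ) : ℝ) ≤ l1Norm (y - v) * l1Norm (u - v) := by
    exact_mod_cast (le_abs_self _).trans (abs_dotProduct_le (abs_apply_le_l1Norm (y - v)) (u - v))
  have hgap : powerGap a t v u y = ((u - v) ⬝ᵥ (u - v) : ℤ) - 2 * ((y - v) ⬝ᵥ (u - v) : ℤ)
      + t * ((a u : ℝ)⁻¹ - (a v : ℝ)⁻¹) := by
    have h := powerGap_add a t v u v (y - v)
    rw [add_sub_cancel] at h
    rw [h]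
    simp only [powerGap, sub_self, zero_dotProduct, sub_zero]
    ring
  have : 0 ≤ t * (a u : ℝ)⁻¹ := by positivity
  linarith

lemma continuousAt_inv_apply (hv : 0 < a v) :
    ContinuousAt (fun b : (Fin d → ℤ) → ℝ≥0 => (b v : ℝ)⁻¹) a :=
  (NNReal.continuous_coe.comp (continuous_apply v)).continuousAt.inv₀ (NNReal.coe_pos.2 hv).ne'

lemma continuousAt_powerGap (hv : 0 < a v) (hu : 0 < a u) :
    ContinuousAt (fun b : (Fin d → ℤ) → ℝ≥0 => powerGap b t v u y) a :=
  continuousAt_const.add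
    (continuousAt_const.mul ((continuousAt_inv_apply hu).sub (continuousAt_inv_apply hv)))

lemma eventually_lt_powerGap {s : ℝ} (ht : 0 < t) (hv : 0 < a v)
    (h : 0 < a u → s < powerGap a t v u y) :
    ∀ᶠ b in 𝓝 a, 0 < b u → s < powerGap b t v u y := by
  -- Multiplied by `b u`, the inequality extends continuously to `b u = 0`.
  let cleared : ((Fin d → ℤ) → ℝ≥0) → ℝ := fun b =>
    b u * (((u - y) ⬝ᵥ (u - y) - (v - y) ⬝ᵥ (v - y) : ℤ) - t * (b v : ℝ)⁻¹ - s) + t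
  have hcleared : ∀ b, 0 < b u → cleared b = b u * (powerGap b t v u y - s) := fun b hb => by
    have : (b u : ℝ) ≠ 0 := (NNReal.coe_pos.2 hb).ne'
    simp only [cleared, powerGap]
    field_simp
    ring
  have hcont : ContinuousAt cleared a :=
    ((NNReal.continuous_coe.comp (continuous_apply u)).continuousAt.mul
      ((continuousAt_const.sub (continuousAt_const.mul (continuousAt_inv_apply hv))).sub
        continuousAt_const)).add continuousAt_const
  have hpos : 0 < cleared a := by
    rcases eq_zero_or_pos (a u) with h0 | h0
    · simpa [cleared, h0] using ht
    · rw [hcleared a h0]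
      exact mul_pos (NNReal.coe_pos.2 h0) (sub_pos.2 (h h0))
  filter_upwards [hcont.eventually (lt_mem_nhds hpos)] with b hb hbu
  rw [hcleared b hbu] at hb
  exact sub_pos.1 (pos_of_mul_pos_right hb (b u).2)

lemma isOpen_setOf_mem_cell (ht : 0 < t) (c : ℝ) (v y : Fin d → ℤ) :
    IsOpen {a : (Fin d → ℤ) → ℝ≥0 | y ∈ cell a t c v} := by
  refine isOpen_iff_mem_nhds.2 fun a ⟨hv, ha⟩ => ?_
  let C : ℝ := t * (a v : ℝ)⁻¹ + 1
  have hpos : ∀ᶠ b in 𝓝 a, 0 < b v := (continuousAt_apply v a).eventually (lt_mem_nhds hv)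
  have hC : ∀ᶠ b in 𝓝 a, t * (b v : ℝ)⁻¹ < C :=
    (continuousAt_const.mul (continuousAt_inv_apply hv)).eventually (gt_mem_nhds (lt_add_one _))
  have hnear : ∀ᶠ b in 𝓝 a, ∀ u ∈ {u : Fin d → ℤ | (((u - v) ⬝ᵥ (u - v) : ℤ) : ℝ) ≤
      C + (c + 2 * l1Norm (y - v)) * l1Norm (u - v)},
      u ≠ v → 0 < b u → c * l1Norm (u - v) < powerGap b t v u y := by
    refine (Filter.eventually_all_finite ((finite_dotProduct_self_le _ _).preimage
      (sub_left_injective (b := v)).injOn)).2 fun u _ => eventually_imp_distrib_left.2 fun huv => ?_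
    exact eventually_lt_powerGap ht hv fun hu => ha u hu huv
  filter_upwards [hpos, hC, hnear] with b hbv hbC hb
  refine ⟨hbv, fun u hu huv => ?_⟩
  by_cases hmem : (((u - v) ⬝ᵥ (u - v) : ℤ) : ℝ) ≤
      C + (c + 2 * l1Norm (y - v)) * l1Norm (u - v)
  · exact hb u hmem huv hu
  · exact lt_powerGap_of_lt_dotProduct_self ht.le hbC.le (not_le.1 hmem)

lemma isOpen_setOf_mem_boundaryLayer (ht : 0 < t) (c : ℝ) (v y : Fin d → ℤ) :
    IsOpen {a : (Fin d → ℤ) → ℝ≥0 | y ∈ boundaryLayer a t c v} := by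
  refine isOpen_iff_mem_nhds.2 fun a ⟨hy, u, hu, huv, hgap⟩ => ?_
  filter_upwards [(isOpen_setOf_mem_cell ht (-1) v y).mem_nhds hy,
    (continuousAt_apply u a).eventually (lt_mem_nhds hu),
    (continuousAt_powerGap hy.1 hu).eventually (gt_mem_nhds hgap)] with b hb hbu hbgap
  exact ⟨hb, u, hbu, huv, hbgap⟩

/-- The midpoint of `y` and `v`, with coordinates rounded towards `v`. -/
def halfway (y v : Fin d → ℤ) : Fin d → ℤ := v - (v - y) / 2

lemma halfway_add (y v q : Fin d → ℤ) : halfway (y + q) (v + q) = halfway y v + q := by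
  simp only [halfway, add_sub_add_right_eq_sub]
  abel

lemma halfway_apply (y v : Fin d → ℤ) (i : Fin d) : halfway y v i = v i - (v i - y i) / 2 := rfl

lemma halfway_mem_cell {A : ℤ} (ha : IsSeparated A a) (hy : y ∈ cell a t c v) :
    halfway y v ∈ cell a (t / 2) ((c + A) / 2 - 1) v := by
  refine ⟨hy.1, fun u hu huv => ?_⟩
  have hgap := hy.2 u hu huv
  have hsep : (A : ℝ) * l1Norm (u - v) ≤ ((u - v) ⬝ᵥ (u - v) : ℤ) := by
    exact_mod_cast ha u v hu hy.1 huv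
  have hround : ∀ i, |(v - halfway y v + (y - halfway y v)) i| ≤ 1 := fun i => by
    simp only [Pi.sub_apply, Pi.add_apply, halfway_apply, abs_le]
    omega
  have hdot : -(l1Norm (u - v) : ℝ) ≤ ((v - halfway y v + (y - halfway y v)) ⬝ᵥ (u - v) : ℤ) := by
    have := (abs_le.1 (abs_dotProduct_le hround (u - v))).1
    rw [one_mul] at this
    exact_mod_cast this
  rw [powerGap_half a t v u y]
  linarith

end Cells

section Counting

variable {d : ℕ}

/-- The cube `{0, …, n - 1}^d`. -/
def cube (d n : ℕ) : Set (Fin d → ℤ) := {m | ∀ i, 0 ≤ m i ∧ m i < n}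

lemma coe_piFinset_Ico (d n : ℕ) :
    (Fintype.piFinset fun _ : Fin d => Finset.Ico 0 (n : ℤ) : Set (Fin d → ℤ)) = cube d n := by
  ext m
  simp [cube]

lemma finite_cube (d n : ℕ) : (cube d n).Finite := by
  rw [← coe_piFinset_Ico]
  exact Finset.finite_toSet _

lemma ncard_cube (d n : ℕ) : (cube d n).ncard = n ^ d := by
  rw [← coe_piFinset_Ico, ncard_coe_finset, Fintype.card_piFinset]
  simp

lemma ncard_mul_le_of_abs_sub_lt {P : Set (Fin d → ℤ)} {n k : ℕ} {i : Fin d} (hP : P ⊆ cube d n)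
    (hline : ∀ m ∈ P, ∀ m' ∈ P, (∀ j ≠ i, m' j = m j) → |m' i - m i| < k) :
    P.ncard * n ≤ k * n ^ d := by
  -- Sweep `P` along direction `i`: a point of the cube determines the line, and the residue
  -- of the original coordinate modulo `k` determines the point of `P` on that line.
  let sweep : (Fin d → ℤ) × ℤ → ℤ × (Fin d → ℤ) := fun p => (p.1 i % k, Function.update p.1 i p.2)
  have hmaps : MapsTo sweep (P ×ˢ Ico (0 : ℤ) n) (Ico (0 : ℤ) k ×ˢ cube d n) := by
    rintro ⟨m, b⟩ ⟨hm, hb⟩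
    have hk : (0 : ℤ) < k := (abs_nonneg _).trans_lt (hline m hm m hm fun _ _ => rfl)
    refine ⟨⟨Int.emod_nonneg _ hk.ne', Int.emod_lt_of_pos _ hk⟩, fun j => ?_⟩
    rcases eq_or_ne j i with rfl | hj
    · simpa [sweep] using hb
    · simpa [sweep, hj] using hP hm j
  have hinj : InjOn sweep (P ×ˢ Ico (0 : ℤ) n) := by
    rintro ⟨m, b⟩ ⟨hm, -⟩ ⟨m', b'⟩ ⟨hm', -⟩ heq
    obtain ⟨hmod, hupd⟩ := Prod.ext_iff.1 heq
    have hb : b = b' := by simpa [sweep] using congrFun hupd i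
    have hj : ∀ j ≠ i, m' j = m j := fun j hj => by simpa [sweep, hj] using (congrFun hupd j).symm
    have hi : m' i = m i := sub_eq_zero.1
      (Int.eq_zero_of_abs_lt_dvd (Int.ModEq.dvd hmod) (hline m hm m' hm' hj))
    refine Prod.ext (funext fun j => ?_) hb
    rcases eq_or_ne j i with rfl | h
    exacts [hi.symm, (hj j h).symm]
  have hcard := ncard_le_ncard_of_injOn sweep hmaps hinj
    ((finite_Ico _ _).prod (finite_cube d n))
  simpa [ncard_prod, ncard_cube, ← Finset.coe_Ico] using hcard

lemma ncard_mul_le_of_forall_exists_direction {S : Set (Fin d → ℤ)} {n k : ℕ} (hS : S ⊆ cube d n)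
    (hdir : ∀ m ∈ S, ∃ (i : Fin d) (σ : ℤˣ), ∀ m' ∈ S, (∀ j ≠ i, m' j = m j) →
      (m' i - m i) * σ < k) :
    S.ncard * n ≤ 2 * d * k * n ^ d := by
  let part : Fin d × ℤˣ → Set (Fin d → ℤ) := fun p =>
    {m ∈ S | ∀ m' ∈ S, (∀ j ≠ p.1, m' j = m j) → (m' p.1 - m p.1) * p.2 < k}
  have hpart : ∀ p, (part p).ncard * n ≤ k * n ^ d := fun p => by
    refine ncard_mul_le_of_abs_sub_lt (i := p.1) ((sep_subset _ _).trans hS)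
      fun m hm m' hm' hj => ?_
    have hlt := hm.2 m' hm'.1 hj
    have hgt := hm'.2 m hm.1 fun j hne => (hj j hne).symm
    have habs : |m' p.1 - m p.1| = |(m' p.1 - m p.1) * p.2| := by
      rw [abs_mul, Int.isUnit_iff_abs_eq.1 p.2.isUnit, mul_one]
    rw [habs, abs_lt]
    constructor <;> linarith
  have hcover : S ⊆ ⋃ p, part p := fun m hm =>
    let ⟨i, σ, h⟩ := hdir m hm
    mem_iUnion.2 ⟨(i, σ), hm, h⟩
  calc S.ncard * n ≤ (∑ p, (part p).ncard) * n := by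
        refine Nat.mul_le_mul_right n ((ncard_le_ncard hcover ?_).trans ?_)
        · exact (finite_cube d n).subset (iUnion_subset fun p => (sep_subset _ _).trans hS)
        · exact ncard_iUnion_le_of_fintype part
    _ = ∑ p, (part p).ncard * n := Finset.sum_mul _ _ _
    _ ≤ ∑ _p : Fin d × ℤˣ, k * n ^ d := Finset.sum_le_sum fun p _ => hpart p
    _ = 2 * d * k * n ^ d := by
        simp only [Finset.sum_const, Finset.card_univ, Fintype.card_prod, Fintype.card_fin,
          Fintype.card_units_int, smul_eq_mul]
        ring

variable {a : (Fin d → ℤ) → ℝ≥0} {t c : ℝ} {v p : Fin d → ℤ}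

lemma exists_forall_two_mul_dotProduct_lt (hp : p ∈ boundaryLayer a t c v) :
    ∃ u ≠ v, ∀ p' ∈ cell a t (-1) v,
      2 * ((p' - p) ⬝ᵥ (u - v) : ℤ) < (c + 1) * l1Norm (u - v) := by
  obtain ⟨-, u, hu, huv, hgap⟩ := hp
  refine ⟨u, huv, fun p' hp' => ?_⟩
  have hgap' := hp'.2 u hu huv
  have hadd := powerGap_add a t v u p (p' - p)
  rw [add_sub_cancel] at hadd
  linarith

lemma abs_sub_sub_halfway_le (p p' v : Fin d → ℤ) (i : Fin d) :
    |(halfway p' v - halfway p v + (halfway p' v - halfway p v) - (p' - p)) i| ≤ 1 := by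
  simp only [Pi.sub_apply, Pi.add_apply, halfway_apply, abs_le]
  omega

lemma exists_l1Norm_le_mul_coord {w : Fin d → ℤ} (hw : w ≠ 0) :
    ∃ (i : Fin d) (σ : ℤˣ), 0 < w i * σ ∧ l1Norm w ≤ d * (w i * σ) := by
  obtain ⟨j, hj⟩ := Function.ne_iff.1 hw
  have : Nonempty (Fin d) := ⟨j⟩
  obtain ⟨i, hi⟩ := Finite.exists_max fun i => |w i|
  obtain ⟨σ, hσ⟩ : ∃ σ : ℤˣ, w i * σ = |w i| := by
    rcases abs_choice (w i) with h | h
    · exact ⟨1, by simp [h]⟩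
    · exact ⟨-1, by simp [h]⟩
  refine ⟨i, σ, ?_, ?_⟩ <;> rw [hσ]
  exacts [(abs_pos.2 hj).trans_le (hi j), l1Norm_le_mul_of_forall_abs_le hi]

lemma exists_direction_of_mem_boundaryLayer (hp : p ∈ boundaryLayer a t c v) :
    ∃ (i : Fin d) (σ : ℤˣ), ∀ p' ∈ cell a t (-1) v,
      (∀ j ≠ i, halfway p' v j = halfway p v j) →
        4 * ((halfway p' v i - halfway p v i) * σ : ℤ) < d * (c + 3) := by
  obtain ⟨u, huv, hlt⟩ := exists_forall_two_mul_dotProduct_lt hp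
  set w := u - v
  obtain ⟨i, σ, hpos, hnorm⟩ := exists_l1Norm_le_mul_coord (sub_ne_zero.2 huv)
  refine ⟨i, σ, fun p' hp' hline => ?_⟩
  set δ := halfway p' v i - halfway p v i
  have hδ : halfway p' v - halfway p v = Pi.single i δ := by
    ext k
    rcases eq_or_ne k i with rfl | hk
    · simp [δ]
    · simp [hk, hline k hk]
  have hround : 2 * δ * w i ≤ (p' - p) ⬝ᵥ w + l1Norm w := by
    have h := (abs_le.1 (abs_dotProduct_le (abs_sub_sub_halfway_le p p' v) w)).2
    rw [hδ, sub_dotProduct, add_dotProduct, single_dotProduct] at h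
    linarith
  have hc : 0 < c + 1 := by
    have h := hlt p hp.1
    rw [sub_self, zero_dotProduct, Int.cast_zero, mul_zero] at h
    exact pos_of_mul_pos_left h (Int.cast_nonneg (l1Norm_nonneg w))
  have hσ : δ * σ * (w i * σ) = δ * w i := by
    rw [mul_mul_mul_comm, Int.units_coe_mul_self, mul_one]
  refine lt_of_mul_lt_mul_right ?_ (Int.cast_nonneg hpos.le : (0 : ℝ) ≤ (w i * σ : ℤ))
  calc (4 * (δ * σ : ℤ) * (w i * σ : ℤ) : ℝ) = 2 * (2 * δ * w i : ℤ) := by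
        rw [mul_assoc, ← Int.cast_mul, hσ]
        push_cast
        ring
    _ ≤ 2 * ((p' - p) ⬝ᵥ w + l1Norm w : ℤ) := by gcongr
    _ < (c + 3) * l1Norm w := by push_cast; linarith [hlt p' hp']
    _ ≤ (c + 3) * (d * (w i * σ) : ℤ) := by gcongr; linarith
    _ = d * (c + 3) * (w i * σ : ℤ) := by push_cast; ring

lemma halfway_mem_cell_of_mem_boundaryLayer {n : ℕ} (ha : IsSeparated (4 * n + 3) a)
    (hp : p ∈ boundaryLayer a t c v) : halfway p v ∈ cell a (t / 2) (2 * n) v := by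
  convert halfway_mem_cell ha hp.1 using 2
  push_cast
  ring

lemma ncard_halfway_boundaryLayer_mul_le {n k : ℕ} (ha : IsSeparated (4 * n + 3) a)
    (hk : d * (c + 3) ≤ 4 * k) {S : Set (Fin d → ℤ)} (hS : S ⊆ cube d n)
    (hbd : ∀ m ∈ S, ∃ v, ∃ p ∈ boundaryLayer a t c v, halfway p v = m) :
    S.ncard * n ≤ 2 * d * k * n ^ d := by
  have hzero : ∀ {p v}, p ∈ boundaryLayer a t c v → halfway p v ∈ S → 0 ∈ cell a (t / 2) 0 v := by
    intro p v hp hm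
    have hneg : ∀ i, |(-halfway p v) i| ≤ n := fun i => by
      rw [Pi.neg_apply, abs_neg, abs_of_nonneg (hS hm i).1]
      exact (hS hm i).2.le
    simpa using add_mem_cell (halfway_mem_cell_of_mem_boundaryLayer ha hp) hneg
  refine ncard_mul_le_of_forall_exists_direction hS fun m hm => ?_
  obtain ⟨v, p, hp, rfl⟩ := hbd m hm
  obtain ⟨i, σ, hdir⟩ := exists_direction_of_mem_boundaryLayer hp
  refine ⟨i, σ, fun m' hm' hline => ?_⟩
  obtain ⟨v', p', hp', rfl⟩ := hbd m' hm'
  obtain rfl : v = v' := eq_of_mem_cell_of_mem_cell (hzero hp hm) (hzero hp' hm')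
  have := (hdir p' hp'.1 hline).trans_le hk
  exact_mod_cast (by linarith : (((halfway p' v i - halfway p v i) * σ : ℤ) : ℝ) < k)

end Counting

section Marker

/-- The marker property of an action: for every finite set `F` of group elements there is an open
set which every orbit meets and which is disjoint from its translates by nonzero elements of `F`. -/
def HasMarkerProperty (G X : Type*) [AddGroup G] [AddAction G X] [TopologicalSpace X] : Prop :=
  ∀ F : Set G, F.Finite → ∃ W : Set X, IsOpen W ∧ (∀ x, ∃ g : G, g +ᵥ x ∈ W) ∧
    ∀ g ∈ F, g ≠ 0 → Disjoint W (g +ᵥ W)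

variable {G X : Type*} [AddGroup G] [AddAction G X] [TopologicalSpace X] [ContinuousConstVAdd G X]

lemma eventually_disjoint_vadd [T2Space X] {g : G} {x : X} (hgx : g +ᵥ x ≠ x) :
    ∀ᶠ W in (𝓝 x).smallSets, Disjoint W (g +ᵥ W) := by
  obtain ⟨V, V', hV, hV', hx, hgx', hdisj⟩ := t2_separation hgx.symm
  have hnhds : V ∩ (g +ᵥ ·) ⁻¹' V' ∈ 𝓝 x :=
    inter_mem (hV.mem_nhds hx) ((hV'.preimage (continuous_const_vadd g)).mem_nhds hgx')
  filter_upwards [eventually_smallSets_subset.2 hnhds] with W hW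
  exact hdisj.mono (hW.trans inter_subset_left)
    (image_subset_iff.2 (hW.trans inter_subset_right))

lemma hasMarkerProperty_of_isMinimal [T2Space X] [AddAction.IsMinimal G X] [IsCancelVAdd G X] :
    HasMarkerProperty G X := by
  intro F hF
  rcases isEmpty_or_nonempty X with hX | ⟨⟨x⟩⟩
  · exact ⟨∅, isOpen_empty, fun x => (hX.false x).elim, fun g _ _ => disjoint_bot_left⟩
  have hsmall : ∀ᶠ W in (𝓝 x).smallSets, ∀ g ∈ F, g ≠ 0 → Disjoint W (g +ᵥ W) :=
    (eventually_all_finite hF).2 fun g _ => eventually_imp_distrib_left.2 fun hg =>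
      eventually_disjoint_vadd fun hgx => hg (IsCancelVAdd.eq_zero_of_vadd hgx)
  obtain ⟨V, hV, hVF⟩ := eventually_smallSets.1 hsmall
  obtain ⟨W, hWV, hW, hxW⟩ := mem_nhds_iff.1 hV
  exact ⟨W, hW, fun y => hW.exists_vadd_mem G y ⟨x, hxW⟩, hVF W hWV⟩

lemma HasMarkerProperty.exists_bump [CompactSpace X] [NormalSpace X] (hX : HasMarkerProperty G X)
    {F : Set G} (hF : F.Finite) :
    ∃ φ : X → ℝ≥0, Continuous φ ∧ (∀ x : X, ∃ g : G, 0 < φ (g +ᵥ x)) ∧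
      ∀ x : X, ∀ g ∈ F, 0 < φ x → 0 < φ (g +ᵥ x) → g = 0 := by
  obtain ⟨W, hW, hmeets, hWF⟩ := hX F hF
  obtain ⟨s, hs⟩ := isCompact_univ.elim_finite_subcover (fun g : G => (g +ᵥ ·) ⁻¹' W)
    (fun g => hW.preimage (continuous_const_vadd g)) fun x _ => mem_iUnion.2 (hmeets x)
  obtain ⟨C, hCcover, hC, hCW⟩ := exists_iUnion_eq_closed_subset
    (u := fun g : s => (g.1 +ᵥ ·) ⁻¹' W) (fun g => hW.preimage (continuous_const_vadd g.1))
    (fun _ => toFinite _) (by simpa [eq_univ_iff_forall, subset_def] using hs)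
  obtain ⟨f, hf0, hf1, -⟩ := exists_continuous_zero_one_of_isClosed hW.isClosed_compl
    (isClosed_iUnion_of_finite fun g : s => (hC g).vadd g.1)
    (disjoint_compl_left_iff_subset.2 (iUnion_subset fun g => image_subset_iff.2 (hCW g)))
  have hfW : ∀ x, 0 < (f x).toNNReal → x ∈ W := fun x hx => by
    by_contra hxW
    rw [Real.toNNReal_pos, hf0 hxW] at hx
    exact lt_irrefl _ hx
  refine ⟨fun x => (f x).toNNReal, by fun_prop, fun x => ?_, fun x g hg hx hgx => ?_⟩
  · obtain ⟨g, hg⟩ := mem_iUnion.1 (hCcover.symm ▸ mem_univ x)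
    have h1 : f (g.1 +ᵥ x) = 1 := hf1 (mem_iUnion.2 ⟨g, vadd_mem_vadd_set hg⟩)
    exact ⟨g, Real.toNNReal_pos.2 (h1 ▸ one_pos)⟩
  · by_contra hne
    exact (hWF g hg hne).notMem_of_mem_left (hfW _ hgx) (vadd_mem_vadd_set (hfW x hx))

end Marker

section Dynamics

variable {d : ℕ} {X : Type*} [AddAction (Fin d → ℤ) X] {φ : X → ℝ≥0} {t c : ℝ}
  {x : X} {v y q m : Fin d → ℤ}

/-- The values of `φ` along the orbit of `x`: the return times of `x` to `{φ > 0}` are the sites,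
and `x` itself sits at `0`. -/
def config (φ : X → ℝ≥0) (x : X) (v : Fin d → ℤ) : ℝ≥0 := φ (v +ᵥ x)

lemma config_vadd (φ : X → ℝ≥0) (q : Fin d → ℤ) (x : X) :
    config φ (q +ᵥ x) = fun w => config φ x (w + q) := by
  funext w
  rw [config, config, add_vadd]

lemma mem_cell_config_vadd :
    y ∈ cell (config φ (q +ᵥ x)) t c v ↔ y + q ∈ cell (config φ x) t c (v + q) := by
  rw [config_vadd, mem_cell_translate]

lemma mem_boundaryLayer_config_vadd :
    y ∈ boundaryLayer (config φ (q +ᵥ x)) t c v ↔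
      y + q ∈ boundaryLayer (config φ x) t c (v + q) := by
  rw [config_vadd, mem_boundaryLayer_translate]

variable (d) in
/-- The top level of a tower of height `n`: the points `x` such that `x - cube d n` is contained in
one cell and `x` differs from the site of that cell by a multiple of `n`. -/
def towerBase (φ : X → ℝ≥0) (t : ℝ) (n : ℕ) : Set X :=
  {x | ∃ w : Fin d → ℤ, ∀ m ∈ cube d n, -m ∈ cell (config φ x) t 0 ((n : ℤ) • w)}

lemma mem_neg_vadd_towerBase {n : ℕ} :
    x ∈ -m +ᵥ towerBase d φ t n ↔
      ∃ w : Fin d → ℤ, ∀ m' ∈ cube d n, m - m' ∈ cell (config φ x) t 0 ((n : ℤ) • w + m) := by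
  simp only [mem_vadd_set_iff_neg_vadd_mem, neg_neg, towerBase, mem_ofPred_eq,
    mem_cell_config_vadd, neg_add_eq_sub]

lemma disjoint_neg_vadd_towerBase {n : ℕ} {m m' : Fin d → ℤ} (hm : m ∈ cube d n)
    (hm' : m' ∈ cube d n) (hne : m ≠ m') :
    Disjoint (-m +ᵥ towerBase d φ t n) (-m' +ᵥ towerBase d φ t n) := by
  refine disjoint_left.2 fun x hx hx' => hne (funext fun i => ?_)
  obtain ⟨w, hw⟩ := mem_neg_vadd_towerBase.1 hx
  obtain ⟨w', hw'⟩ := mem_neg_vadd_towerBase.1 hx'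
  have hcenter : (n : ℤ) • w + m = (n : ℤ) • w' + m' :=
    eq_of_mem_cell_of_mem_cell (sub_self m ▸ hw m hm) (sub_self m' ▸ hw' m' hm')
  calc m i = ((n : ℤ) • w + m) i % n := by
        simp [Int.emod_eq_of_lt (hm i).1 (hm i).2]
    _ = m' i := by rw [hcenter]; simp [Int.emod_eq_of_lt (hm' i).1 (hm' i).2]

lemma mem_iUnion_neg_vadd_towerBase {n : ℕ} (hn : 0 < n)
    (hx : 0 ∈ cell (config φ x) t (2 * n) v) :
    x ∈ ⋃ m ∈ cube d n, -m +ᵥ towerBase d φ t n := by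
  have hn' : (0 : ℤ) < n := Int.natCast_pos.2 hn
  let m : Fin d → ℤ := fun i => v i % n
  have hm : m ∈ cube d n := fun i => ⟨Int.emod_nonneg _ hn'.ne', Int.emod_lt_of_pos _ hn'⟩
  have hv : ((n : ℤ) • (fun i => v i / n) + m) = v := funext fun i => Int.mul_ediv_add_emod _ _
  refine mem_iUnion₂.2 ⟨m, hm, mem_neg_vadd_towerBase.2 ⟨fun i => v i / n, fun m' hm' => ?_⟩⟩
  have habs : ∀ i, |(m - m') i| ≤ n := fun i => by
    have := hm i
    have := hm' i
    rw [Pi.sub_apply, abs_le]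
    omega
  rw [hv]
  simpa using add_mem_cell hx habs

/-- The points `x` in the boundary layer of the cell of `v`, a position counted from `x`. -/
def boundarySet (φ : X → ℝ≥0) (c : ℝ) (v : Fin d → ℤ) : Set X :=
  {x | 0 ∈ boundaryLayer (config φ x) 1 c v}

lemma exists_halfway_eq_of_vadd_mem (hx : m +ᵥ x ∈ halfway 0 v +ᵥ boundarySet φ c v) :
    ∃ p ∈ boundaryLayer (config φ x) 1 c (v / 2 + m), halfway p (v / 2 + m) = m := by
  have hv : v + (-halfway 0 v + m) = v / 2 + m := by
    rw [halfway, sub_zero]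
    abel
  rw [mem_vadd_set_iff_neg_vadd_mem, vadd_vadd, boundarySet, mem_ofPred_eq,
    mem_boundaryLayer_config_vadd, hv] at hx
  refine ⟨_, hx, ?_⟩
  rw [← hv, halfway_add, add_neg_cancel_left]

lemma zero_mem_cell_of_mem_vadd_boundarySet {n : ℕ}
    (ha : IsSeparated (d := d) (4 * n + 3) (config φ x))
    (hx : x ∈ halfway 0 v +ᵥ boundarySet φ c v) :
    0 ∈ cell (config φ x) (1 / 2) (2 * n) (v / 2) := by
  rw [← zero_vadd (Fin d → ℤ) x] at hx
  obtain ⟨p, hp, hhalf⟩ := exists_halfway_eq_of_vadd_mem hx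
  rw [add_zero] at hp hhalf
  exact hhalf ▸ halfway_mem_cell_of_mem_boundaryLayer ha hp

lemma vadd_boundarySet_subset_iUnion_neg_vadd_towerBase {n : ℕ} (hn : 0 < n)
    (ha : ∀ x : X, IsSeparated (d := d) (4 * n + 3) (config φ x)) :
    halfway 0 v +ᵥ boundarySet φ c v ⊆ ⋃ m ∈ cube d n, -m +ᵥ towerBase d φ (1 / 2) n :=
  fun x hx => mem_iUnion_neg_vadd_towerBase hn (zero_mem_cell_of_mem_vadd_boundarySet (ha x) hx)

lemma disjoint_vadd_boundarySet {n : ℕ} {v' : Fin d → ℤ}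
    (ha : ∀ x : X, IsSeparated (d := d) (4 * n + 3) (config φ x)) (hv : v / 2 ≠ v' / 2) :
    Disjoint (halfway 0 v +ᵥ boundarySet φ c v) (halfway 0 v' +ᵥ boundarySet φ c v') := by
  have hzero : ∀ {x w}, x ∈ halfway 0 w +ᵥ boundarySet φ c w →
      0 ∈ cell (config φ x) (1 / 2) 0 (w / 2) := fun {x w} hx =>
    cell_anti _ _ _ (by positivity) (zero_mem_cell_of_mem_vadd_boundarySet (ha x) hx)
  exact disjoint_left.2 fun x hx hx' => hv (eq_of_mem_cell_of_mem_cell (hzero hx) (hzero hx'))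

lemma pos_of_nonneg_of_lt_mul {b ε : ℝ} {n : ℕ} (hb : 0 ≤ b) (h : b < ε * n) : 0 < n :=
  Nat.pos_of_ne_zero (Nat.cast_ne_zero.1 (right_ne_zero_of_mul (hb.trans_lt h).ne'))

lemma ncard_vadd_mem_boundarySet_lt {n k : ℕ} {ε : ℝ}
    (ha : IsSeparated (d := d) (4 * n + 3) (config φ x)) (hk : d * (c + 3) ≤ 4 * k)
    (hε : 2 * d * k < ε * n) {ι : Type*} (v : ι → Fin d → ℤ) :
    ({m ∈ cube d n | m +ᵥ x ∈ ⋃ j, halfway 0 (v j) +ᵥ boundarySet φ c (v j)}.ncard : ℝ)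
      < ε * n ^ d := by
  set S := {m ∈ cube d n | m +ᵥ x ∈ ⋃ j, halfway 0 (v j) +ᵥ boundarySet φ c (v j)}
  have hS : ∀ m ∈ S, ∃ w, ∃ p ∈ boundaryLayer (config φ x) 1 c w, halfway p w = m := by
    intro m hm
    obtain ⟨j, hj⟩ := mem_iUnion.1 hm.2
    exact ⟨_, exists_halfway_eq_of_vadd_mem hj⟩
  have hn : 0 < n := pos_of_nonneg_of_lt_mul (by positivity) hε
  refine lt_of_mul_lt_mul_right ?_ (Nat.cast_nonneg n)
  calc (S.ncard * n : ℝ) ≤ 2 * d * k * n ^ d := by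
        exact_mod_cast ncard_halfway_boundaryLayer_mul_le ha hk (sep_subset _ _) hS
    _ < ε * n * n ^ d := by gcongr
    _ = ε * n ^ d * n := by ring

lemma exists_parity_coloring {r : ℕ} (hr : 2 ^ d ≤ r) :
    ∃ f : (Fin d → ℤ) → Fin r, ∀ v v', f v = f v' → v / 2 = v' / 2 → v = v' := by
  let parity : (Fin d → ℤ) → Fin d → Fin 2 := fun v i => ⟨(v i % 2).toNat, by omega⟩
  refine ⟨fun v => Fin.castLE hr (finFunctionFinEquiv (parity v)), fun v v' hf hhalf => ?_⟩
  have hparity : parity v = parity v' := finFunctionFinEquiv.injective (Fin.castLE_injective hr hf)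
  funext i
  have hmod : (v i % 2).toNat = (v' i % 2).toNat := Fin.val_eq_of_eq (congrFun hparity i)
  have hdiv : v i / 2 = v' i / 2 := congrFun hhalf i
  omega

variable [TopologicalSpace X] [ContinuousConstVAdd (Fin d → ℤ) X]

variable (d) in
lemma continuous_config (hφ : Continuous φ) : Continuous (config (d := d) φ) :=
  continuous_pi fun v => hφ.comp (continuous_const_vadd v)

lemma isOpen_towerBase (hφ : Continuous φ) (ht : 0 < t) (n : ℕ) :
    IsOpen (towerBase d φ t n) := by
  simp only [towerBase, ofPred_exists, ofPred_forall]
  exact isOpen_iUnion fun w => (finite_cube d n).isOpen_biInter fun m _ =>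
    (isOpen_setOf_mem_cell ht 0 _ _).preimage (continuous_config d hφ)

lemma isOpen_boundarySet (hφ : Continuous φ) (c : ℝ) (v : Fin d → ℤ) :
    IsOpen (boundarySet φ c v) :=
  (isOpen_setOf_mem_boundaryLayer one_pos c v 0).preimage (continuous_config d hφ)

lemma exists_finset_zero_mem_cell [CompactSpace X] (hφ : Continuous φ)
    (hsite : ∀ x : X, ∃ v : Fin d → ℤ, 0 < φ (v +ᵥ x)) (ht : 0 < t) (hc : c < 0) :
    ∃ s : Finset (Fin d → ℤ), ∀ x, ∃ v ∈ s, 0 ∈ cell (config φ x) t c v := by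
  obtain ⟨s, hs⟩ := isCompact_univ.elim_finite_subcover
    (fun v => config φ ⁻¹' {a | 0 ∈ cell a t c v})
    (fun v => (isOpen_setOf_mem_cell ht c v 0).preimage (continuous_config d hφ))
    fun x _ => mem_iUnion.2 (exists_mem_cell ht.le hc (hsite x) 0)
  exact ⟨s, fun x => by simpa using hs (mem_univ x)⟩

lemma HasMarkerProperty.exists_isSeparated_config [CompactSpace X] [NormalSpace X]
    (hX : HasMarkerProperty (Fin d → ℤ) X) (A : ℤ) :
    ∃ φ : X → ℝ≥0, Continuous φ ∧ (∀ x : X, ∃ v : Fin d → ℤ, 0 < φ (v +ᵥ x)) ∧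
      ∀ x, IsSeparated (d := d) A (config φ x) := by
  obtain ⟨φ, hφ, hsite, hreturn⟩ := hX.exists_bump
    (finite_Icc (fun _ : Fin d => -(d * A)) fun _ => d * A)
  refine ⟨φ, hφ, hsite, fun x u v hu hv huv => ?_⟩
  have hnotMem : u - v ∉ Icc (fun _ : Fin d => -(d * A)) fun _ => d * A := fun hmem =>
    sub_ne_zero.2 huv (hreturn (v +ᵥ x) (u - v) hmem hv (by rwa [vadd_vadd, sub_add_cancel]))
  obtain ⟨j, hj⟩ : ∃ j, d * A < |(u - v) j| := by
    by_contra! hle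
    exact hnotMem ⟨fun i => (abs_le.1 (hle i)).1, fun i => (abs_le.1 (hle i)).2⟩
  exact mul_l1Norm_le_dotProduct_self hj.le

end Dynamics

lemma two_pow_le_floor_two_mul_sqrt_add_one_pow (d : ℕ) :
    2 ^ d ≤ (⌊2 * √(d : ℝ)⌋₊ + 1) ^ d := by
  rcases Nat.eq_zero_or_pos d with rfl | hd
  · simp
  have hsqrt : 1 ≤ √(d : ℝ) := Real.one_le_sqrt.2 (Nat.one_le_cast.2 hd)
  have hfloor : 1 ≤ ⌊2 * √(d : ℝ)⌋₊ := Nat.le_floor (by push_cast; linarith)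
  exact Nat.pow_le_pow_left (Nat.succ_le_succ hfloor) d

end TwoTowers

open TwoTowers in
open scoped Pointwise in
theorem two_towers_general {X : Type*} [TopologicalSpace X] [CompactSpace X] [NormalSpace X]
    {d : ℕ} [AddAction (Fin d → ℤ) X] [ContinuousConstVAdd (Fin d → ℤ) X]
    (hX : HasMarkerProperty (Fin d → ℤ) X) {N₀ N₁ : ℕ} (hN₀ : 0 < N₀) {ε : ℝ}
    (hε : 2 * d * (d * (N₀ + 2) : ℕ) < ε * N₁) {r : ℕ} (hr : 2 ^ d ≤ r) :
    ∃ (Ω₀ Ω₁ : Set X) (K : ℕ) (U : Fin K → Set X) (h : Fin K → (Fin d → ℤ)),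
      IsOpen Ω₀ ∧ IsOpen Ω₁ ∧
      (∀ m m' : Fin d → ℤ, m ∈ cube d N₀ → m' ∈ cube d N₀ → m ≠ m' →
        Disjoint (-m +ᵥ Ω₀) (-m' +ᵥ Ω₀)) ∧
      (∀ m m' : Fin d → ℤ, m ∈ cube d N₁ → m' ∈ cube d N₁ → m ≠ m' →
        Disjoint (-m +ᵥ Ω₁) (-m' +ᵥ Ω₁)) ∧
      (∀ k, IsOpen (U k)) ∧
      (Set.univ \ (⋃ m ∈ cube d N₀, -m +ᵥ Ω₀) ⊆ ⋃ k, U k) ∧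
      (∀ k, h k +ᵥ U k ⊆ ⋃ m ∈ cube d N₁, -m +ᵥ Ω₁) ∧
      (∃ G : Fin K → Fin r, ∀ k k', k ≠ k' → G k = G k' →
        Disjoint (h k +ᵥ U k) (h k' +ᵥ U k')) ∧
      (∀ x ∈ Ω₁, ({m ∈ cube d N₁ | m +ᵥ x ∈ ⋃ k, h k +ᵥ U k}.ncard : ℝ) < ε * N₁ ^ d) := by
  have hN₁ : 0 < N₁ := pos_of_nonneg_of_lt_mul (by positivity) hε
  obtain ⟨φ, hφ, hsite, hsep⟩ := hX.exists_isSeparated_config (4 * N₁ + 3)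
  obtain ⟨s, hs⟩ := exists_finset_zero_mem_cell hφ hsite one_pos neg_one_lt_zero
  obtain ⟨parity, hparity⟩ := exists_parity_coloring hr
  let v : Fin s.card → Fin d → ℤ := fun k => s.equivFin.symm k
  have hv : Function.Injective v := Subtype.val_injective.comp s.equivFin.symm.injective
  refine ⟨towerBase d φ 1 N₀, towerBase d φ (1 / 2) N₁, s.card,
    fun k => boundarySet φ (2 * N₀ + 1) (v k), fun k => halfway 0 (v k),
    isOpen_towerBase hφ one_pos N₀, isOpen_towerBase hφ one_half_pos N₁,
    fun _ _ => disjoint_neg_vadd_towerBase, fun _ _ => disjoint_neg_vadd_towerBase,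
    fun k => isOpen_boundarySet hφ _ _, fun x hx => ?_,
    fun k => vadd_boundarySet_subset_iUnion_neg_vadd_towerBase hN₁ hsep,
    ⟨fun k => parity (v k), fun k k' hk hG => disjoint_vadd_boundarySet hsep fun hhalf =>
      hk (hv (hparity _ _ hG hhalf))⟩,
    fun x _ => ncard_vadd_mem_boundarySet_lt (hsep x) ?_ hε v⟩
  · obtain ⟨w, hw, hxw⟩ := hs x
    rcases mem_cell_or_mem_boundaryLayer (lt_add_one (2 * N₀ : ℝ)) hxw with hdeep | hshallow
    · exact absurd (mem_iUnion_neg_vadd_towerBase hN₀ hdeep) hx.2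
    · exact Set.mem_iUnion.2 ⟨s.equivFin ⟨w, hw⟩, by simpa [v, boundarySet] using hshallow⟩
  · have : (0 : ℝ) ≤ d * (N₀ + 2) := by positivity
    push_cast
    linarith

/-- Two towers: for a minimal free action of `ℤ^d` on a compact metric space
`X`, and any `N ∈ ℕ`, `ε > 0`, there exist two Rokhlin towers of heights `N₀, N₁ ≥ N` with
open bases `Ω₀, Ω₁`, an open cover `U₁, …, U_K` of the complement of the first tower, and
`h₁, …, h_K ∈ ℤ^d`, such that (1) each `T^{h_k}(U_k)` is contained in the second tower;
(2) the indices can be split into at most `(⌊2√d⌋+1)^d` groups with the translates in each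
group pairwise disjoint; (3) for each `x ∈ Ω₁`, the number of `m ∈ {0,…,N₁-1}^d` with
`T^m x ∈ ⋃_k T^{h_k}(U_k)` is less than `ε·N₁^d`. -/
theorem two_towers {X : Type*} [MetricSpace X] [CompactSpace X]
    (d : ℕ) (hd : 1 ≤ d) (T : (Fin d → ℤ) → X → X)
    (hTc : ∀ n, Continuous (T n)) (hT0 : ∀ x, T 0 x = x)
    (hTadd : ∀ m n x, T (m + n) x = T m (T n x))
    (hmin : ∀ x : X, Dense (Set.range fun n : Fin d → ℤ => T n x))
    (hfree : ∀ (x : X) (n : Fin d → ℤ), T n x = x → n = 0)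
    (N : ℕ) (hN : 0 < N) (ε : ℝ) (hε : 0 < ε) :
    ∃ (N₀ N₁ : ℕ) (Ω₀ Ω₁ : Set X) (K : ℕ) (U : Fin K → Set X) (h : Fin K → (Fin d → ℤ)),
      N ≤ N₀ ∧ N ≤ N₁ ∧ IsOpen Ω₀ ∧ IsOpen Ω₁ ∧
      (∀ m m' : Fin d → ℤ, (∀ i, 0 ≤ m i ∧ m i < (N₀ : ℤ)) → (∀ i, 0 ≤ m' i ∧ m' i < (N₀ : ℤ)) →
        m ≠ m' → Disjoint (T (-m) '' Ω₀) (T (-m') '' Ω₀)) ∧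
      (∀ m m' : Fin d → ℤ, (∀ i, 0 ≤ m i ∧ m i < (N₁ : ℤ)) → (∀ i, 0 ≤ m' i ∧ m' i < (N₁ : ℤ)) →
        m ≠ m' → Disjoint (T (-m) '' Ω₁) (T (-m') '' Ω₁)) ∧
      (∀ k, IsOpen (U k)) ∧
      (Set.univ \ (⋃ m ∈ {m : Fin d → ℤ | ∀ i, 0 ≤ m i ∧ m i < (N₀ : ℤ)}, T (-m) '' Ω₀) ⊆
        ⋃ k, U k) ∧
      (∀ k, T (h k) '' U k ⊆
        ⋃ m ∈ {m : Fin d → ℤ | ∀ i, 0 ≤ m i ∧ m i < (N₁ : ℤ)}, T (-m) '' Ω₁) ∧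
      (∃ G : Fin K → Fin ((Nat.floor (2 * Real.sqrt d) + 1) ^ d),
        ∀ k k', k ≠ k' → G k = G k' → Disjoint (T (h k) '' U k) (T (h k') '' U k')) ∧
      (∀ x ∈ Ω₁, (Nat.card {m : Fin d → ℤ // (∀ i, 0 ≤ m i ∧ m i < (N₁ : ℤ)) ∧
          T m x ∈ ⋃ k, T (h k) '' U k} : ℝ) < ε * (N₁ : ℝ) ^ d) := by
  let : AddAction (Fin d → ℤ) X := { vadd := T, zero_vadd := hT0, add_vadd := hTadd }
  have : ContinuousConstVAdd (Fin d → ℤ) X := ⟨hTc⟩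
  have : AddAction.IsMinimal (Fin d → ℤ) X := ⟨hmin⟩
  have : IsCancelVAdd (Fin d → ℤ) X :=
    isCancelVAdd_iff_eq_zero_of_vadd_eq.2 fun n x => hfree x n
  obtain ⟨M, hM⟩ := exists_nat_gt (2 * d * (d * (N + 2) : ℕ) / ε)
  have hε' : 2 * d * (d * (N + 2) : ℕ) < ε * (max N M : ℕ) := by
    rw [mul_comm ε]
    exact (div_lt_iff₀ hε).1 (hM.trans_le (Nat.cast_le.2 (le_max_right N M)))
  obtain ⟨Ω₀, Ω₁, K, U, h, H⟩ := two_towers_general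
    (TwoTowers.hasMarkerProperty_of_isMinimal (G := Fin d → ℤ) (X := X)) hN hε'
    (TwoTowers.two_pow_le_floor_two_mul_sqrt_add_one_pow d)
  exact ⟨N, max N M, Ω₀, Ω₁, K, U, h, le_rfl, le_max_left N M, H⟩
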